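/- Let χ be a partial (Δ+1)-edge-coloring of G. Then every colored edge of G is contained in at most Δ + 1 maximal alternating paths (over all pairs of distinct colors in {1,…,Δ+1}); consequently the sum of the lengths of all maximal alternating paths is at most m(Δ+1), where m is the number of edges of G. -/

import Mathlib

namespace EC

open Classical

/-- A partial `k`-edge-coloring of `G`. -/
def IsPartialColoring {V : Type*} (G : SimpleGraph V) (k : ℕ)
    (χ : Sym2 V → Option (Fin k)) : Prop :=
  (∀ e, e ∉ G.edgeSet → χ e = none) ∧
  ∀ e f : Sym2 V, e ≠ f → (∃ v : V, v ∈ e ∧ v ∈ f) →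
    ∀ c : Fin k, χ e = some c → χ f ≠ some c

/-- A maximal `(c₀,c₁)`-alternating path: a simple path with distinct endpoints all of whose
edges are colored `c₀` or `c₁`, such that each of its two endpoint vertices is incident to
exactly one edge colored `c₀` or `c₁`. -/
def IsMaxAltPath {V : Type*} (G : SimpleGraph V) {k : ℕ} (χ : Sym2 V → Option (Fin k))
    (c₀ c₁ : Fin k) {a b : V} (p : G.Walk a b) : Prop :=
  p.IsPath ∧ a ≠ b ∧
  (∀ e ∈ p.edges, χ e = some c₀ ∨ χ e = some c₁) ∧
  (∃! w : V, χ s(a, w) = some c₀ ∨ χ s(a, w) = some c₁) ∧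
  (∃! w : V, χ s(b, w) = some c₀ ∨ χ s(b, w) = some c₁)

/-- `x = (q, S)` represents a maximal alternating path of `G` under `χ`: `q` is an unordered
pair of distinct colors `{c₀, c₁}` and `S` is the edge set of a maximal `(c₀,c₁)`-alternating
path of `G`. -/
def IsMaxAltPathPair {V : Type*} [DecidableEq V] (G : SimpleGraph V) {k : ℕ}
    (χ : Sym2 V → Option (Fin k)) (q : Sym2 (Fin k)) (S : Finset (Sym2 V)) : Prop :=
  ∃ (c₀ c₁ : Fin k) (a b : V) (p : G.Walk a b),
    c₀ ≠ c₁ ∧ q = s(c₀, c₁) ∧ IsMaxAltPath G χ c₀ c₁ p ∧ S = p.edges.toFinset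

/-!
At an interior vertex of a maximal `(c₀, c₁)`-alternating path, properness of the coloring forces
the two path edges to use up both colors; at an endpoint this is the maximality condition. Hence no
edge colored `c₀` or `c₁` leaves the path, so two such paths sharing an edge have the same edges.
A path through an edge of color `c` is therefore determined by the second color of its color pair,
which bounds the number of these paths by the number of colors. Summing over the edges bounds the
total length.
-/

lemma sum_card_le_card_mul_of_card_filter_mem_le {ι α : Type*} [DecidableEq α] {s : Finset ι}
    {A : ι → Finset α} {t : Finset α} {n : ℕ} (hA : ∀ i ∈ s, A i ⊆ t)
    (hn : ∀ x ∈ t, (s.filter (x ∈ A ·)).card ≤ n) : ∑ i ∈ s, (A i).card ≤ t.card * n :=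
  calc ∑ i ∈ s, (A i).card
    _ = ∑ i ∈ s, (t.filter (· ∈ A i)).card := Finset.sum_congr rfl fun i hi => by
      rw [Finset.filter_mem_eq_inter, Finset.inter_eq_right.2 (hA i hi)]
    _ = ∑ x ∈ t, (s.filter (x ∈ A ·)).card :=
      Finset.sum_card_bipartiteAbove_eq_sum_card_bipartiteBelow fun i x => x ∈ A i
    _ ≤ t.card * n := Finset.sum_le_card_nsmul t _ n hn

section

variable {V : Type*} {G : SimpleGraph V} {k : ℕ} {χ : Sym2 V → Option (Fin k)}
  {c c₀ c₁ : Fin k} {q : Sym2 (Fin k)} {S T : Finset (Sym2 V)} {e f : Sym2 V} {a b a' b' v : V}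

section Walk

open SimpleGraph.Walk

lemma exists_ne_mem_edges_of_mem_support {p : G.Walk a b} (hp : p.IsPath) (hv : v ∈ p.support)
    (ha : v ≠ a) (hb : v ≠ b) : ∃ x y, x ≠ y ∧ s(v, x) ∈ p.edges ∧ s(v, y) ∈ p.edges := by
  obtain ⟨i, rfl, hi⟩ := mem_support_iff_exists_getVert.1 hv
  have i_ne_zero : i ≠ 0 := by rintro rfl; simp at ha
  have i_lt_length : i < p.length := hi.lt_of_ne (by rintro rfl; simp at hb)
  obtain ⟨x, y, hxy, hnbr⟩ :=
    Set.ncard_eq_two.1 (hp.ncard_neighborSet_toSubgraph_internal_eq_two i_ne_zero i_lt_length)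
  have mem_edges_iff (z : V) : s(p.getVert i, z) ∈ p.edges ↔ z ∈ ({x, y} : Set V) := by
    rw [← hnbr, SimpleGraph.Subgraph.mem_neighborSet, adj_toSubgraph_iff_mem_edges]
  exact ⟨x, y, hxy, (mem_edges_iff x).2 (by simp), (mem_edges_iff y).2 (by simp)⟩

lemma mem_iff_start_mem_of_mem_support (U : Set V) {p : G.Walk a b}
    (hU : ∀ u w, s(u, w) ∈ p.edges → u ∈ U → w ∈ U) (hv : v ∈ p.support) : v ∈ U ↔ a ∈ U := by
  induction p with
  | nil => rw [mem_support_nil_iff.1 hv]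
  | @cons a w b _ p ih =>
    rcases List.mem_cons.1 hv with rfl | hv
    · rfl
    · have hstart : w ∈ U ↔ a ∈ U := ⟨hU w a (by simp [Sym2.eq_swap]), hU a w (by simp)⟩
      exact (ih (fun x y hxy => hU x y (List.mem_cons_of_mem _ hxy)) hv).trans hstart

end Walk

lemma IsPartialColoring.eq_of_color_eq (hχ : IsPartialColoring G k χ) (hve : v ∈ e) (hvf : v ∈ f)
    (he : χ e = some c) (hf : χ f = some c) : e = f :=
  by_contra fun hne => hχ.2 e f hne ⟨v, hve, hvf⟩ c he hf

namespace IsMaxAltPath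

variable {p : G.Walk a b} {p' : G.Walk a' b'}

lemma swap_colors (hp : IsMaxAltPath G χ c₀ c₁ p) : IsMaxAltPath G χ c₁ c₀ p := by
  simpa only [IsMaxAltPath, or_comm] using hp

lemma mem_edges_of_mem_support (hχ : IsPartialColoring G k χ) (hp : IsMaxAltPath G χ c₀ c₁ p)
    (hv : v ∈ p.support) (hve : v ∈ e) (he : χ e = some c₀ ∨ χ e = some c₁) : e ∈ p.edges := by
  obtain ⟨hpath, hab, hcolor, hstart, hend⟩ := hp
  obtain ⟨z, rfl⟩ := Sym2.mem_iff_exists.1 hve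
  by_cases hendpoint : v = a ∨ v = b
  · have hunique : ∃! w, χ s(v, w) = some c₀ ∨ χ s(v, w) = some c₁ := by
      rcases hendpoint with rfl | rfl <;> assumption
    obtain ⟨f, hf, hvf⟩ := (SimpleGraph.Walk.mem_support_iff_exists_mem_edges_of_not_nil
      (SimpleGraph.Walk.not_nil_of_ne hab)).1 hv
    obtain ⟨w, rfl⟩ := Sym2.mem_iff_exists.1 hvf
    rwa [hunique.unique he (hcolor _ hf)]
  · obtain ⟨hva, hvb⟩ := not_or.1 hendpoint
    obtain ⟨x, y, hxy, hx, hy⟩ := exists_ne_mem_edges_of_mem_support hpath hv hva hvb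
    have color_inj {u w : V} {c : Fin k} (hu : χ s(v, u) = some c) (hw : χ s(v, w) = some c) :
        u = w :=
      Sym2.congr_right.1 (hχ.eq_of_color_eq (Sym2.mem_mk_left v u) (Sym2.mem_mk_left v w) hu hw)
    have hz : z = x ∨ z = y := by
      have := hcolor _ hx
      have := hcolor _ hy
      grind
    rcases hz with rfl | rfl <;> assumption

lemma edges_subset_of_mem_edges (hχ : IsPartialColoring G k χ) (hp : IsMaxAltPath G χ c₀ c₁ p)
    (hp' : IsMaxAltPath G χ c₀ c₁ p') (he : e ∈ p.edges) (he' : e ∈ p'.edges) :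
    p.edges ⊆ p'.edges := by
  have hcolor := hp.2.2.1
  have support_closed (u w : V) (huw : s(u, w) ∈ p.edges) (hu : u ∈ p'.support) :
      w ∈ p'.support :=
    p'.snd_mem_support_of_mem_edges
      (hp'.mem_edges_of_mem_support hχ hu (Sym2.mem_mk_left u w) (hcolor _ huw))
  have mem_support_iff {u : V} (hu : u ∈ p.support) : u ∈ p'.support ↔ a ∈ p'.support :=
    mem_iff_start_mem_of_mem_support {u | u ∈ p'.support} support_closed hu
  have start_mem : a ∈ p'.support :=
    (mem_support_iff (p.mem_support_of_mem_edges he e.out_fst_mem)).1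
      (p'.mem_support_of_mem_edges he' e.out_fst_mem)
  exact fun f hf => hp'.mem_edges_of_mem_support hχ
    ((mem_support_iff (p.mem_support_of_mem_edges hf f.out_fst_mem)).2 start_mem)
    f.out_fst_mem (hcolor f hf)

end IsMaxAltPath

namespace IsMaxAltPathPair

variable [DecidableEq V]

lemma subset_edgeSet (hS : IsMaxAltPathPair G χ q S) : (S : Set (Sym2 V)) ⊆ G.edgeSet := by
  obtain ⟨_, _, _, _, p, _, _, _, rfl⟩ := hS
  exact fun e he => p.edges_subset_edgeSet (List.mem_toFinset.1 he)

lemma exists_color_mem (hS : IsMaxAltPathPair G χ q S) (he : e ∈ S) :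
    ∃ c ∈ q, χ e = some c := by
  obtain ⟨c₀, c₁, _, _, p, _, rfl, hp, rfl⟩ := hS
  rcases hp.2.2.1 e (List.mem_toFinset.1 he) with h₀ | h₁
  · exact ⟨c₀, Sym2.mem_mk_left c₀ c₁, h₀⟩
  · exact ⟨c₁, Sym2.mem_mk_right c₀ c₁, h₁⟩

lemma eq_of_mem (hχ : IsPartialColoring G k χ) (hS : IsMaxAltPathPair G χ q S)
    (hT : IsMaxAltPathPair G χ q T) (heS : e ∈ S) (heT : e ∈ T) : S = T := by
  obtain ⟨c₀, c₁, _, _, p, _, rfl, hp, rfl⟩ := hS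
  obtain ⟨d₀, d₁, _, _, p', _, hq, hp', rfl⟩ := hT
  replace hp' : IsMaxAltPath G χ c₀ c₁ p' := by
    rcases Sym2.eq_iff.1 hq with ⟨rfl, rfl⟩ | ⟨rfl, rfl⟩
    exacts [hp', hp'.swap_colors]
  rw [List.mem_toFinset] at heS heT
  ext f
  rw [List.mem_toFinset, List.mem_toFinset]
  exact ⟨fun hf => hp.edges_subset_of_mem_edges hχ hp' heS heT hf,
    fun hf => hp'.edges_subset_of_mem_edges hχ hp heT heS hf⟩

end IsMaxAltPathPair

lemma encard_maxAltPathPairs_through_le [DecidableEq V] (hχ : IsPartialColoring G k χ)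
    (e : Sym2 V) :
    {x : Sym2 (Fin k) × Finset (Sym2 V) | IsMaxAltPathPair G χ x.1 x.2 ∧ e ∈ x.2}.encard ≤ k := by
  set paths := {x : Sym2 (Fin k) × Finset (Sym2 V) | IsMaxAltPathPair G χ x.1 x.2 ∧ e ∈ x.2}
  have fst_injOn : paths.InjOn Prod.fst := by
    rintro ⟨q, S⟩ ⟨hS, heS⟩ ⟨_, T⟩ ⟨hT, heT⟩ rfl
    exact Prod.ext rfl (hS.eq_of_mem hχ hT heS heT)
  rcases paths.eq_empty_or_nonempty with hempty | ⟨⟨_, _⟩, hS, he⟩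
  · simp [hempty]
  obtain ⟨c, -, hc⟩ := hS.exists_color_mem he
  have fst_mapsTo : paths.MapsTo Prod.fst ((fun d => s(c, d)) '' Set.univ) := by
    rintro ⟨q, T⟩ ⟨hT, heT⟩
    obtain ⟨c', hc'q, hc'⟩ := hT.exists_color_mem heT
    obtain rfl : c = c' := Option.some.inj (hc.symm.trans hc')
    obtain ⟨d, rfl⟩ := Sym2.mem_iff_exists.1 hc'q
    exact Set.mem_image_of_mem _ (Set.mem_univ d)
  calc paths.encard
    _ ≤ ((fun d => s(c, d)) '' Set.univ).encard :=
      Set.encard_le_encard_of_injOn fst_mapsTo fst_injOn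
    _ ≤ (Set.univ : Set (Fin k)).encard := Set.encard_image_le _ _
    _ = k := by simp

theorem paths_containing_edge_and_total_length_general [DecidableEq V] [Fintype G.edgeSet]
    (hχ : IsPartialColoring G k χ) :
    (∀ e, {x : Sym2 (Fin k) × Finset (Sym2 V) |
        IsMaxAltPathPair G χ x.1 x.2 ∧ e ∈ x.2}.encard ≤ k) ∧
    ∀ P : Finset (Sym2 (Fin k) × Finset (Sym2 V)), (∀ x ∈ P, IsMaxAltPathPair G χ x.1 x.2) →
      ∑ x ∈ P, x.2.card ≤ G.edgeFinset.card * k := by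
  refine ⟨encard_maxAltPathPairs_through_le hχ, fun P hP => ?_⟩
  refine sum_card_le_card_mul_of_card_filter_mem_le (fun x hx e he => ?_) fun e _ => ?_
  · exact SimpleGraph.mem_edgeFinset.2 ((hP x hx).subset_edgeSet he)
  · rw [← Nat.cast_le (α := ℕ∞), ← Set.encard_coe_eq_coe_finsetCard]
    refine (Set.encard_le_encard fun x hx => ?_).trans (encard_maxAltPathPairs_through_le hχ e)
    obtain ⟨hxP, he⟩ := Finset.mem_filter.1 hx
    exact ⟨hP x hxP, he⟩

end

/-- For a partial `(Δ+1)`-edge-coloring of `G`: every colored edge of `G` is contained in at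
most `Δ + 1` maximal alternating paths (over all pairs of distinct colors); consequently the
sum of the lengths of all maximal alternating paths is at most `m (Δ + 1)`, where `m` is the
number of edges of `G`. -/
theorem paths_containing_edge_and_total_length {V : Type*} [Fintype V] [DecidableEq V]
    (G : SimpleGraph V) [DecidableRel G.Adj]
    (χ : Sym2 V → Option (Fin (G.maxDegree + 1)))
    (hχ : IsPartialColoring G (G.maxDegree + 1) χ) :
    (∀ e ∈ G.edgeSet, χ e ≠ none →
      {x : Sym2 (Fin (G.maxDegree + 1)) × Finset (Sym2 V) |
          IsMaxAltPathPair G χ x.1 x.2 ∧ e ∈ x.2}.ncard ≤ G.maxDegree + 1) ∧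
    ∑ x ∈ (Set.toFinite {x : Sym2 (Fin (G.maxDegree + 1)) × Finset (Sym2 V) |
        IsMaxAltPathPair G χ x.1 x.2}).toFinset, x.2.card
      ≤ G.edgeFinset.card * (G.maxDegree + 1) := by
  obtain ⟨through_edge, total_length⟩ := paths_containing_edge_and_total_length_general hχ
  exact ⟨fun e _ _ => (Set.encard_le_coe_iff_finite_ncard_le.1 (through_edge e)).2,
    total_length _ fun x hx => by simpa using hx⟩

end EC
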